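/- Let X be a real normed space, σ the incenter mixer on X, and τ(a,b,c) = a + b + c - 2σ(a,b,c) the Nagel co-mixer. Then for all a, b, c, a', b', c' ∈ X: (1) the Hausdorff distance satisfies d_H({σ(a,b,c), τ(a,b,c)}, {σ(a',b',c'), τ(a',b',c')}) ≤ 9 · d_H({a,b,c}, {a',b',c'}); (2) if {a,b,c} has at most two elements then {σ(a,b,c), τ(a,b,c)} = {a,b,c}; and (3) both σ(a,b,c) and τ(a,b,c) lie in the convex hull of {a,b,c}. (This is the 9-Lipschitz retraction from triples onto pairs whose image is contained in the convex hull.) -/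

import Mathlib

/-!
Write `p, q, r` for the side lengths opposite to `a, b, c`, and `S = p + q + r`. Then
`S • σ = p • a + q • b + r • c`, also for `S = 0`. The triangle inequality makes the weights
`1 - 2p/S` etc. of `τ` nonnegative, so `σ` and `τ` lie in the convex hull, and the retraction
property is a direct computation: `σ(a,a,c) = a`, `τ(a,a,c) = c`.

For the Lipschitz bound let `h` be the Hausdorff distance of the two triples. The relation
"at distance at most `h`" between the two triples has no isolated points, so by Hall's theorem
(`matching_or_bad`, a finite check) one of two situations occurs.

* The triples are matched by a bijection moving points by at most `h`. If `S ≤ S'`, then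
  `S' • (σ' - σ) = ∑ p' • (a' - a) + ∑ (p' - p) • (a - σ)`, where `|p' - p| ≤ 2h` and
  `∑ ‖a - σ‖ ≤ 2(pq + qr + rp)/S ≤ 2S/3`. Hence `‖σ' - σ‖ ≤ 7h/3` and
  `‖τ' - τ‖ ≤ 3h + 14h/3 ≤ 9h`.
* Up to order, `a` and `b` are close to `a'` while `c` is close to `b'` and `c'`. Then
  `σ(a,b,c)` is `2h`-close to `a'` and `τ(a,b,c)` is `6h`-close to `c` (`near_pair`), and
  likewise for the second triple with the roles exchanged, so `σ` is `8h`-close to `τ'` and `τ`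
  is `8h`-close to `σ'`.
-/

open scoped Classical in
/-- The incenter mixer on a real normed space. -/
noncomputable def incenterMixer {X : Type*} [NormedAddCommGroup X] [NormedSpace ℝ X]
    (a b c : X) : X :=
  if a = b ∧ b = c then a
  else (‖b - c‖ + ‖a - c‖ + ‖a - b‖)⁻¹ • (‖b - c‖ • a + ‖a - c‖ • b + ‖a - b‖ • c)

/-- The Nagel co-mixer `τ(a,b,c) = a + b + c - 2σ(a,b,c)` on a real normed space. -/
noncomputable def nagelComixer {X : Type*} [NormedAddCommGroup X] [NormedSpace ℝ X]
    (a b c : X) : X :=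
  a + b + c - (2 : ℝ) • incenterMixer a b c

/-! ### Distances between pairs and triples -/

section Distances

variable {X : Type*} [NormedAddCommGroup X]

/-- The perimeter of a triple vanishes only if the triple is constant. -/
lemma perimeter_eq_zero {a b c : X} (h : ‖b - c‖ + ‖a - c‖ + ‖a - b‖ = 0) : a = b ∧ b = c := by
  have h1 := norm_nonneg (b - c)
  have h2 := norm_nonneg (a - c)
  have h3 := norm_nonneg (a - b)
  constructor
  · exact sub_eq_zero.1 (norm_eq_zero.1 (by linarith))
  · exact sub_eq_zero.1 (norm_eq_zero.1 (by linarith))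

lemma abs_norm_sub_sub_norm_sub_le {a b a' b' : X} {h : ℝ} (ha : ‖a' - a‖ ≤ h)
    (hb : ‖b' - b‖ ≤ h) : |‖a' - b'‖ - ‖a - b‖| ≤ 2 * h := by
  have h1 := abs_norm_sub_norm_le (a' - b') (a - b)
  have h2 : a' - b' - (a - b) = (a' - a) - (b' - b) := by abel
  rw [h2] at h1
  linarith [norm_sub_le (a' - a) (b' - b)]

lemma exists_dist_le_hausdorffDist {s t : Set X} (hs : s.Finite) (ht : t.Finite)
    (ht0 : t.Nonempty) {x : X} (hx : x ∈ s) :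
    ∃ y ∈ t, dist x y ≤ Metric.hausdorffDist s t := by
  obtain ⟨y, hy, e⟩ := ht.isCompact.exists_infDist_eq_dist ht0 x
  refine ⟨y, hy, e ▸ Metric.infDist_le_hausdorffDist_of_mem hx ?_⟩
  exact Metric.hausdorffEDist_ne_top_of_nonempty_of_bounded ⟨x, hx⟩ ht0
    hs.isBounded ht.isBounded

lemma exists_dist_triple_le (a b c a' b' c' : X) {x : X} (hx : x ∈ ({a, b, c} : Set X)) :
    dist x a' ≤ Metric.hausdorffDist ({a, b, c} : Set X) {a', b', c'} ∨
    dist x b' ≤ Metric.hausdorffDist ({a, b, c} : Set X) {a', b', c'} ∨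
    dist x c' ≤ Metric.hausdorffDist ({a, b, c} : Set X) {a', b', c'} := by
  obtain ⟨y, hy, h⟩ := exists_dist_le_hausdorffDist (s := {a, b, c}) (t := {a', b', c'})
    (by simp) (by simp) (by simp) hx
  rcases hy with rfl | rfl | rfl
  · exact .inl h
  · exact .inr (.inl h)
  · exact .inr (.inr h)

lemma hausdorffDist_pair_le {s t s' t' : X} {h : ℝ} (h1 : dist s s' ≤ h) (h2 : dist t t' ≤ h) :
    Metric.hausdorffDist ({s, t} : Set X) {s', t'} ≤ h := by
  refine Metric.hausdorffDist_le_of_mem_dist (dist_nonneg.trans h1) ?_ ?_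
  · rintro x (rfl | rfl)
    · exact ⟨s', by simp, h1⟩
    · exact ⟨t', by simp, h2⟩
  · rintro x (rfl | rfl)
    · exact ⟨s, by simp, by rwa [dist_comm]⟩
    · exact ⟨t, by simp, by rwa [dist_comm]⟩

end Distances

section IncenterMixer

variable {X : Type*} [NormedAddCommGroup X] [NormedSpace ℝ X]

/-! ### Symmetry, constant triples and repeated points -/

lemma incenterMixer_self (a : X) : incenterMixer a a a = a := by
  simp [incenterMixer]

/-- The division-free form of the definition of `σ`, valid for constant triples as well. -/
lemma perimeter_smul_incenterMixer (a b c : X) :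
    (‖b - c‖ + ‖a - c‖ + ‖a - b‖) • incenterMixer a b c =
      ‖b - c‖ • a + ‖a - c‖ • b + ‖a - b‖ • c := by
  by_cases h : a = b ∧ b = c
  · obtain ⟨rfl, rfl⟩ := h
    simp
  · have hS : ‖b - c‖ + ‖a - c‖ + ‖a - b‖ ≠ 0 := fun h0 => h (perimeter_eq_zero h0)
    rw [incenterMixer, if_neg h, smul_smul, mul_inv_cancel₀ hS, one_smul]

lemma incenterMixer_swap₁₂ (a b c : X) : incenterMixer b a c = incenterMixer a b c := by
  by_cases h : a = b ∧ b = c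
  · obtain ⟨rfl, rfl⟩ := h
    rfl
  · have h' : ¬ (b = a ∧ a = c) := fun ⟨h1, h2⟩ => h ⟨h1.symm, h1.trans h2⟩
    rw [incenterMixer, incenterMixer, if_neg h, if_neg h', norm_sub_rev b a,
      add_comm ‖a - c‖ ‖b - c‖, add_comm (‖a - c‖ • b)]

lemma incenterMixer_swap₂₃ (a b c : X) : incenterMixer a c b = incenterMixer a b c := by
  by_cases h : a = b ∧ b = c
  · obtain ⟨rfl, rfl⟩ := h
    rfl
  · have h' : ¬ (a = c ∧ c = b) := fun ⟨h1, h2⟩ => h ⟨h1.trans h2, h2.symm⟩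
    rw [incenterMixer, incenterMixer, if_neg h, if_neg h', norm_sub_rev c b,
      add_right_comm, add_right_comm (‖b - c‖ • a)]

lemma nagelComixer_swap₁₂ (a b c : X) : nagelComixer b a c = nagelComixer a b c := by
  rw [nagelComixer, nagelComixer, incenterMixer_swap₁₂, add_comm b a]

lemma nagelComixer_swap₂₃ (a b c : X) : nagelComixer a c b = nagelComixer a b c := by
  rw [nagelComixer, nagelComixer, incenterMixer_swap₂₃, add_right_comm]

lemma incenterMixer_left (a c : X) : incenterMixer a a c = a := by
  by_cases h : a = c
  · subst h
    exact incenterMixer_self a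
  · have h0 : ‖a - c‖ ≠ 0 := norm_ne_zero_iff.2 (sub_ne_zero.2 h)
    have key := perimeter_smul_incenterMixer a a c
    simp only [sub_self, norm_zero, zero_smul, add_zero, ← add_smul] at key
    exact smul_right_injective X (r := ‖a - c‖ + ‖a - c‖) (by simpa using h0) key

lemma nagelComixer_left (a c : X) : nagelComixer a a c = c := by
  rw [nagelComixer, incenterMixer_left, two_smul]
  abel

/-! ### Convex hull -/

lemma mem_convexHull_triple {a b c x : X} {u v w : ℝ} (hu : 0 ≤ u) (hv : 0 ≤ v) (hw : 0 ≤ w)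
    (h : u + v + w = 1) (hx : x = u • a + v • b + w • c) :
    x ∈ convexHull ℝ ({a, b, c} : Set X) := by
  have hs : ({a, b, c} : Set X) ⊆ convexHull ℝ {a, b, c} := subset_convexHull ℝ _
  have := (convex_convexHull ℝ ({a, b, c} : Set X)).sum_mem (t := Finset.univ)
    (w := ![u, v, w]) (z := ![a, b, c])
    (by intro i _; fin_cases i <;> assumption)
    (by simpa [Fin.sum_univ_three] using h)
    (by intro i _; fin_cases i <;> exact hs (by simp))
  simpa [Fin.sum_univ_three, ← hx] using this

lemma mixers_mem_convexHull (a b c : X) :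
    incenterMixer a b c ∈ convexHull ℝ ({a, b, c} : Set X) ∧
      nagelComixer a b c ∈ convexHull ℝ ({a, b, c} : Set X) := by
  by_cases h : a = b ∧ b = c
  · obtain ⟨rfl, rfl⟩ := h
    simp [incenterMixer_left, nagelComixer_left]
  have hS : ‖b - c‖ + ‖a - c‖ + ‖a - b‖ ≠ 0 := fun h0 => h (perimeter_eq_zero h0)
  have hσ : incenterMixer a b c = (‖b - c‖ + ‖a - c‖ + ‖a - b‖)⁻¹ •
      (‖b - c‖ • a + ‖a - c‖ • b + ‖a - b‖ • c) := by
    rw [incenterMixer, if_neg h]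
  have tp : ‖b - c‖ ≤ ‖a - c‖ + ‖a - b‖ := by
    have := norm_sub_le_norm_sub_add_norm_sub b a c
    rw [norm_sub_rev b a] at this
    linarith
  have tq : ‖a - c‖ ≤ ‖b - c‖ + ‖a - b‖ := by
    linarith [norm_sub_le_norm_sub_add_norm_sub a b c]
  have tr : ‖a - b‖ ≤ ‖b - c‖ + ‖a - c‖ := by
    have := norm_sub_le_norm_sub_add_norm_sub a c b
    rw [norm_sub_rev c b] at this
    linarith
  have hτ : nagelComixer a b c = a + b + c - (2 : ℝ) • incenterMixer a b c := rfl
  rw [hσ] at hτ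
  rw [hσ]
  have hp := norm_nonneg (b - c)
  have hq := norm_nonneg (a - c)
  have hr := norm_nonneg (a - b)
  generalize ‖b - c‖ = p at *
  generalize ‖a - c‖ = q at *
  generalize ‖a - b‖ = r at *
  have hS' : 0 ≤ (p + q + r)⁻¹ := by positivity
  constructor
  · refine mem_convexHull_triple (u := (p + q + r)⁻¹ * p) (v := (p + q + r)⁻¹ * q)
      (w := (p + q + r)⁻¹ * r) (by positivity) (by positivity) (by positivity) ?_ ?_
    · field_simp
    · module
  · refine mem_convexHull_triple (u := (p + q + r)⁻¹ * (q + r - p))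
      (v := (p + q + r)⁻¹ * (p + r - q)) (w := (p + q + r)⁻¹ * (p + q - r))
      (mul_nonneg hS' (by linarith)) (mul_nonneg hS' (by linarith))
      (mul_nonneg hS' (by linarith)) ?_ ?_
    · field_simp
      ring
    · have e (t : ℝ) : (p + q + r)⁻¹ * (p + q + r - 2 * t) = 1 - 2 * ((p + q + r)⁻¹ * t) := by
        field_simp
      rw [hτ, show q + r - p = p + q + r - 2 * p by ring,
        show p + r - q = p + q + r - 2 * q by ring,
        show p + q - r = p + q + r - 2 * r by ring, e, e, e]
      module

/-! ### Lipschitz bounds for matched triples -/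

lemma perimeter_mul_norm_sub_incenterMixer_le (a b c : X) :
    (‖b - c‖ + ‖a - c‖ + ‖a - b‖) * ‖a - incenterMixer a b c‖ ≤ 2 * (‖a - c‖ * ‖a - b‖) := by
  have hS : 0 ≤ ‖b - c‖ + ‖a - c‖ + ‖a - b‖ := by positivity
  have e : (‖b - c‖ + ‖a - c‖ + ‖a - b‖) • (a - incenterMixer a b c) =
      ‖a - c‖ • (a - b) + ‖a - b‖ • (a - c) := by
    rw [smul_sub, perimeter_smul_incenterMixer]
    module
  have h1 := norm_add_le (‖a - c‖ • (a - b)) (‖a - b‖ • (a - c))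
  rw [← e] at h1
  simp only [norm_smul, norm_norm, Real.norm_of_nonneg hS] at h1
  linarith

/-- The distances from the incenter to the vertices add up to at most two thirds of the
perimeter. -/
lemma sum_norm_sub_incenterMixer_le (a b c : X) :
    ‖a - incenterMixer a b c‖ + ‖b - incenterMixer a b c‖ + ‖c - incenterMixer a b c‖ ≤
      2 / 3 * (‖b - c‖ + ‖a - c‖ + ‖a - b‖) := by
  by_cases h : a = b ∧ b = c
  · obtain ⟨rfl, rfl⟩ := h
    simp [incenterMixer_left]
  have hS : 0 < ‖b - c‖ + ‖a - c‖ + ‖a - b‖ :=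
    lt_of_le_of_ne (by positivity) fun h0 => h (perimeter_eq_zero h0.symm)
  have h1 := perimeter_mul_norm_sub_incenterMixer_le a b c
  have h2 := perimeter_mul_norm_sub_incenterMixer_le b a c
  have h3 := perimeter_mul_norm_sub_incenterMixer_le c a b
  rw [incenterMixer_swap₁₂, norm_sub_rev b a] at h2
  rw [incenterMixer_swap₁₂, incenterMixer_swap₂₃, norm_sub_rev c a, norm_sub_rev c b] at h3
  refine le_of_mul_le_mul_left ?_ hS
  nlinarith [sq_nonneg (‖b - c‖ - ‖a - c‖), sq_nonneg (‖b - c‖ - ‖a - b‖),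
    sq_nonneg (‖a - c‖ - ‖a - b‖)]

lemma norm_incenterMixer_sub_le_aux {a b c a' b' c' : X} {h : ℝ} (ha : ‖a' - a‖ ≤ h)
    (hb : ‖b' - b‖ ≤ h) (hc : ‖c' - c‖ ≤ h)
    (hS : ‖b - c‖ + ‖a - c‖ + ‖a - b‖ ≤ ‖b' - c'‖ + ‖a' - c'‖ + ‖a' - b'‖) :
    ‖incenterMixer a' b' c' - incenterMixer a b c‖ ≤ 7 / 3 * h := by
  have hh : 0 ≤ h := (norm_nonneg _).trans ha
  by_cases h' : a' = b' ∧ b' = c'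
  · obtain ⟨rfl, rfl⟩ := h'
    have : ‖b - c‖ + ‖a - c‖ + ‖a - b‖ = 0 := le_antisymm (by simpa using hS) (by positivity)
    obtain ⟨rfl, rfl⟩ := perimeter_eq_zero this
    rw [incenterMixer_left, incenterMixer_left]
    linarith
  have hS' : 0 < ‖b' - c'‖ + ‖a' - c'‖ + ‖a' - b'‖ :=
    lt_of_le_of_ne (by positivity) fun h0 => h' (perimeter_eq_zero h0.symm)
  have hp := abs_norm_sub_sub_norm_sub_le hb hc
  have hq := abs_norm_sub_sub_norm_sub_le ha hc
  have hr := abs_norm_sub_sub_norm_sub_le ha hb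
  have hsum := sum_norm_sub_incenterMixer_le a b c
  have e1 := perimeter_smul_incenterMixer a b c
  have e2 := perimeter_smul_incenterMixer a' b' c'
  have p0 := norm_nonneg (b' - c')
  have q0 := norm_nonneg (a' - c')
  have r0 := norm_nonneg (a' - b')
  generalize incenterMixer a b c = s at *
  generalize incenterMixer a' b' c' = s' at *
  generalize ‖b - c‖ = p at *
  generalize ‖a - c‖ = q at *
  generalize ‖a - b‖ = r at *
  generalize ‖b' - c'‖ = p' at *
  generalize ‖a' - c'‖ = q' at *
  generalize ‖a' - b'‖ = r' at *
  have e : (p' + q' + r') • (s' - s) =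
      (p' • (a' - a) + q' • (b' - b) + r' • (c' - c)) +
      ((p' - p) • (a - s) + (q' - q) • (b - s) + (r' - r) • (c - s)) := by
    have e3 : (p' - p) • (a - s) + (q' - q) • (b - s) + (r' - r) • (c - s) =
        p' • (a - s) + q' • (b - s) + r' • (c - s)
          - ((p • a + q • b + r • c) - (p + q + r) • s) := by module
    rw [e3, e1, smul_sub, e2]
    module
  have n1 := norm_add₃_le (a := p' • (a' - a)) (b := q' • (b' - b)) (c := r' • (c' - c))
  have n2 := norm_add₃_le (a := (p' - p) • (a - s)) (b := (q' - q) • (b - s))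
    (c := (r' - r) • (c - s))
  have n3 := congrArg norm e
  rw [norm_smul, Real.norm_of_nonneg hS'.le] at n3
  have n4 := n3.le.trans (norm_add_le _ _)
  simp only [norm_smul, Real.norm_of_nonneg p0, Real.norm_of_nonneg q0,
    Real.norm_of_nonneg r0] at n1
  simp only [norm_smul, Real.norm_eq_abs] at n2
  have m1 := mul_le_mul_of_nonneg_left ha p0
  have m2 := mul_le_mul_of_nonneg_left hb q0
  have m3 := mul_le_mul_of_nonneg_left hc r0
  have m4 := mul_le_mul_of_nonneg_right hp (norm_nonneg (a - s))
  have m5 := mul_le_mul_of_nonneg_right hq (norm_nonneg (b - s))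
  have m6 := mul_le_mul_of_nonneg_right hr (norm_nonneg (c - s))
  have m7 := mul_le_mul_of_nonneg_left (hsum.trans
    (mul_le_mul_of_nonneg_left hS (by norm_num))) (by positivity : 0 ≤ 2 * h)
  refine le_of_mul_le_mul_left ?_ hS'
  linarith

lemma norm_incenterMixer_sub_le {a b c a' b' c' : X} {h : ℝ} (ha : ‖a' - a‖ ≤ h)
    (hb : ‖b' - b‖ ≤ h) (hc : ‖c' - c‖ ≤ h) :
    ‖incenterMixer a' b' c' - incenterMixer a b c‖ ≤ 7 / 3 * h := by
  rcases le_total (‖b - c‖ + ‖a - c‖ + ‖a - b‖) (‖b' - c'‖ + ‖a' - c'‖ + ‖a' - b'‖) with hS | hS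
  · exact norm_incenterMixer_sub_le_aux ha hb hc hS
  · rw [norm_sub_rev] at ha hb hc ⊢
    exact norm_incenterMixer_sub_le_aux ha hb hc hS

lemma norm_nagelComixer_sub_le {a b c a' b' c' : X} {h : ℝ} (ha : ‖a' - a‖ ≤ h)
    (hb : ‖b' - b‖ ≤ h) (hc : ‖c' - c‖ ≤ h) :
    ‖nagelComixer a' b' c' - nagelComixer a b c‖ ≤ 9 * h := by
  have hh : 0 ≤ h := (norm_nonneg _).trans ha
  have hσ := norm_incenterMixer_sub_le ha hb hc
  have e : nagelComixer a' b' c' - nagelComixer a b c =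
      ((a' - a) + (b' - b) + (c' - c)) -
        (2 : ℝ) • (incenterMixer a' b' c' - incenterMixer a b c) := by
    rw [nagelComixer, nagelComixer]
    module
  have h1 := norm_sub_le ((a' - a) + (b' - b) + (c' - c))
    ((2 : ℝ) • (incenterMixer a' b' c' - incenterMixer a b c))
  have h2 := norm_add₃_le (a := a' - a) (b := b' - b) (c := c' - c)
  rw [← e, norm_smul, Real.norm_two] at h1
  linarith

/-! ### Triples with two nearby points -/

/-- If two of the points are close to `x`, then `σ` is close to `x` and `τ` is close to the third
point: the triple is a perturbation of `(x, x, c)`, on which `σ` and `τ` are `x` and `c`. -/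
lemma near_pair {a b c x : X} {h : ℝ} (ha : ‖a - x‖ ≤ h) (hb : ‖b - x‖ ≤ h) :
    ‖incenterMixer a b c - x‖ ≤ 2 * h ∧ ‖nagelComixer a b c - c‖ ≤ 6 * h := by
  have hh : 0 ≤ h := (norm_nonneg _).trans ha
  have key : ‖incenterMixer a b c - x‖ ≤ 2 * h := by
    by_cases h' : a = b ∧ b = c
    · obtain ⟨rfl, rfl⟩ := h'
      rw [incenterMixer_left]
      linarith
    have hS : 0 < ‖b - c‖ + ‖a - c‖ + ‖a - b‖ :=
      lt_of_le_of_ne (by positivity) fun h0 => h' (perimeter_eq_zero h0.symm)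
    have hr : ‖a - b‖ ≤ 2 * h := by
      have := norm_sub_le_norm_sub_add_norm_sub a x b
      rw [norm_sub_rev x b] at this
      linarith
    have hcx1 : ‖c - x‖ ≤ ‖b - c‖ + h := by
      have := norm_sub_le_norm_sub_add_norm_sub c b x
      rw [norm_sub_rev c b] at this
      linarith
    have hcx2 : ‖c - x‖ ≤ ‖a - c‖ + h := by
      have := norm_sub_le_norm_sub_add_norm_sub c a x
      rw [norm_sub_rev c a] at this
      linarith
    have e : (‖b - c‖ + ‖a - c‖ + ‖a - b‖) • (incenterMixer a b c - x) =
        ‖b - c‖ • (a - x) + ‖a - c‖ • (b - x) + ‖a - b‖ • (c - x) := by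
      rw [smul_sub, perimeter_smul_incenterMixer]
      module
    have n1 := norm_add₃_le (a := ‖b - c‖ • (a - x)) (b := ‖a - c‖ • (b - x))
      (c := ‖a - b‖ • (c - x))
    rw [← e] at n1
    simp only [norm_smul, norm_norm, Real.norm_of_nonneg hS.le] at n1
    have m1 := mul_le_mul_of_nonneg_left ha (norm_nonneg (b - c))
    have m2 := mul_le_mul_of_nonneg_left hb (norm_nonneg (a - c))
    have m3 := mul_le_mul_of_nonneg_left hcx1 (norm_nonneg (a - b))
    have m4 := mul_le_mul_of_nonneg_left hcx2 (norm_nonneg (a - b))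
    have m5 := mul_le_mul_of_nonneg_right hr (norm_nonneg (b - c))
    have m6 := mul_le_mul_of_nonneg_right hr (norm_nonneg (a - c))
    have m7 := mul_nonneg hh (norm_nonneg (a - b))
    refine le_of_mul_le_mul_left ?_ hS
    linarith
  refine ⟨key, ?_⟩
  have e : nagelComixer a b c - c =
      (a - x) + (b - x) - (2 : ℝ) • (incenterMixer a b c - x) := by
    rw [nagelComixer]
    module
  have h1 := norm_sub_le ((a - x) + (b - x)) ((2 : ℝ) • (incenterMixer a b c - x))
  rw [← e, norm_smul, Real.norm_two] at h1
  linarith [norm_add_le (a - x) (b - x)]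

/-! ### Comparison of the pairs -/

/-- The two pairs `{σ, τ}` and `{σ', τ'}` can be matched, in one of the two orders, at cost at most
`9h`. -/
def PairsClose (h : ℝ) (a b c a' b' c' : X) : Prop :=
  (dist (incenterMixer a b c) (incenterMixer a' b' c') ≤ 9 * h ∧
    dist (nagelComixer a b c) (nagelComixer a' b' c') ≤ 9 * h) ∨
  (dist (incenterMixer a b c) (nagelComixer a' b' c') ≤ 9 * h ∧
    dist (nagelComixer a b c) (incenterMixer a' b' c') ≤ 9 * h)

lemma pairsClose_swap₁₂ {h : ℝ} {a b c a' b' c' : X} (H : PairsClose h b a c a' b' c') :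
    PairsClose h a b c a' b' c' := by
  rwa [PairsClose, incenterMixer_swap₁₂, nagelComixer_swap₁₂] at H

lemma pairsClose_swap₂₃ {h : ℝ} {a b c a' b' c' : X} (H : PairsClose h a c b a' b' c') :
    PairsClose h a b c a' b' c' := by
  rwa [PairsClose, incenterMixer_swap₂₃, nagelComixer_swap₂₃] at H

lemma pairsClose_swap₁₂' {h : ℝ} {a b c a' b' c' : X} (H : PairsClose h a b c b' a' c') :
    PairsClose h a b c a' b' c' := by
  rwa [PairsClose, incenterMixer_swap₁₂ a', nagelComixer_swap₁₂ a'] at H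

lemma pairsClose_swap₂₃' {h : ℝ} {a b c a' b' c' : X} (H : PairsClose h a b c a' c' b') :
    PairsClose h a b c a' b' c' := by
  rwa [PairsClose, incenterMixer_swap₂₃ a', nagelComixer_swap₂₃ a'] at H

lemma pairsClose_of_matching {h : ℝ} {a b c a' b' c' : X} (ha : dist a a' ≤ h)
    (hb : dist b b' ≤ h) (hc : dist c c' ≤ h) : PairsClose h a b c a' b' c' := by
  have hh : 0 ≤ h := dist_nonneg.trans ha
  rw [dist_eq_norm] at ha hb hc
  left
  rw [dist_eq_norm, dist_eq_norm]
  exact ⟨by linarith [norm_incenterMixer_sub_le ha hb hc], norm_nagelComixer_sub_le ha hb hc⟩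

lemma pairsClose_of_bad {h : ℝ} {a b c a' b' c' : X} (ha : dist a a' ≤ h)
    (hb : dist b a' ≤ h) (hc : dist c b' ≤ h) (hc' : dist c c' ≤ h) :
    PairsClose h a b c a' b' c' := by
  have hh : 0 ≤ h := dist_nonneg.trans ha
  rw [dist_eq_norm] at ha hb
  rw [dist_comm, dist_eq_norm] at hc hc'
  obtain ⟨h3, h4⟩ := near_pair (c := a') hc hc'
  obtain ⟨h1, h2⟩ := near_pair (c := c) ha hb
  -- The odd point `a'` of the second triple stands first, so it is rotated into place.
  rw [incenterMixer_swap₂₃, incenterMixer_swap₁₂, ← dist_eq_norm] at h3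
  rw [nagelComixer_swap₂₃, nagelComixer_swap₁₂, ← dist_eq_norm] at h4
  rw [← dist_eq_norm] at h1 h2
  right
  constructor
  · linarith [dist_triangle_right (incenterMixer a b c) (nagelComixer a' b' c') a']
  · linarith [dist_triangle_right (nagelComixer a b c) (incenterMixer a' b' c') c]

end IncenterMixer

/-- A relation between two triples (`Pij` relates the `i`-th point of the first to the `j`-th point
of the second) without isolated points contains a perfect matching or, by Hall's theorem, relates
two points of the first triple to one point of the second, and the remaining point of the first
triple to the remaining two points of the second. -/
lemma matching_or_bad {P11 P12 P13 P21 P22 P23 P31 P32 P33 : Prop}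
    (r1 : P11 ∨ P12 ∨ P13) (r2 : P21 ∨ P22 ∨ P23) (r3 : P31 ∨ P32 ∨ P33)
    (c1 : P11 ∨ P21 ∨ P31) (c2 : P12 ∨ P22 ∨ P32) (c3 : P13 ∨ P23 ∨ P33) :
    ((P11 ∧ P22 ∧ P33) ∨ (P11 ∧ P23 ∧ P32) ∨ (P12 ∧ P21 ∧ P33) ∨
      (P12 ∧ P23 ∧ P31) ∨ (P13 ∧ P21 ∧ P32) ∨ (P13 ∧ P22 ∧ P31)) ∨
    ((P11 ∧ P21 ∧ P32 ∧ P33) ∨ (P12 ∧ P22 ∧ P31 ∧ P33) ∨ (P13 ∧ P23 ∧ P31 ∧ P32)) ∨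
    ((P11 ∧ P31 ∧ P22 ∧ P23) ∨ (P12 ∧ P32 ∧ P21 ∧ P23) ∨ (P13 ∧ P33 ∧ P21 ∧ P22)) ∨
    ((P21 ∧ P31 ∧ P12 ∧ P13) ∨ (P22 ∧ P32 ∧ P11 ∧ P13) ∨ (P23 ∧ P33 ∧ P11 ∧ P12)) := by
  by_cases P11 <;> by_cases P12 <;> by_cases P13 <;> by_cases P21 <;> by_cases P22 <;>
    by_cases P23 <;> simp_all <;> tauto

section IncenterMixer

variable {X : Type*} [NormedAddCommGroup X] [NormedSpace ℝ X]

lemma pairsClose_hausdorffDist (a b c a' b' c' : X) :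
    PairsClose (Metric.hausdorffDist ({a, b, c} : Set X) {a', b', c'}) a b c a' b' c' := by
  have r1 := exists_dist_triple_le a b c a' b' c' (x := a) (by simp)
  have r2 := exists_dist_triple_le a b c a' b' c' (x := b) (by simp)
  have r3 := exists_dist_triple_le a b c a' b' c' (x := c) (by simp)
  have c1 := exists_dist_triple_le a' b' c' a b c (x := a') (by simp)
  have c2 := exists_dist_triple_le a' b' c' a b c (x := b') (by simp)
  have c3 := exists_dist_triple_le a' b' c' a b c (x := c') (by simp)
  rw [Metric.hausdorffDist_comm] at c1 c2 c3
  simp only [dist_comm a', dist_comm b', dist_comm c'] at c1 c2 c3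
  generalize Metric.hausdorffDist ({a, b, c} : Set X) {a', b', c'} = h at *
  rcases matching_or_bad r1 r2 r3 c1 c2 c3 with
    (⟨h1, h2, h3⟩ | ⟨h1, h2, h3⟩ | ⟨h1, h2, h3⟩ | ⟨h1, h2, h3⟩ | ⟨h1, h2, h3⟩ | ⟨h1, h2, h3⟩) |
    (⟨h1, h2, h3, h4⟩ | ⟨h1, h2, h3, h4⟩ | ⟨h1, h2, h3, h4⟩) |
    (⟨h1, h2, h3, h4⟩ | ⟨h1, h2, h3, h4⟩ | ⟨h1, h2, h3, h4⟩) |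
    (⟨h1, h2, h3, h4⟩ | ⟨h1, h2, h3, h4⟩ | ⟨h1, h2, h3, h4⟩)
  · exact pairsClose_of_matching h1 h2 h3
  · exact pairsClose_swap₂₃' (pairsClose_of_matching h1 h2 h3)
  · exact pairsClose_swap₁₂' (pairsClose_of_matching h1 h2 h3)
  · exact pairsClose_swap₁₂' (pairsClose_swap₂₃' (pairsClose_of_matching h1 h2 h3))
  · exact pairsClose_swap₂₃' (pairsClose_swap₁₂' (pairsClose_of_matching h1 h2 h3))
  · exact pairsClose_swap₂₃' (pairsClose_swap₁₂' (pairsClose_swap₂₃'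
      (pairsClose_of_matching h1 h2 h3)))
  · exact pairsClose_of_bad h1 h2 h3 h4
  · exact pairsClose_swap₁₂' (pairsClose_of_bad h1 h2 h3 h4)
  · exact pairsClose_swap₂₃' (pairsClose_swap₁₂' (pairsClose_of_bad h1 h2 h3 h4))
  · exact pairsClose_swap₂₃ (pairsClose_of_bad h1 h2 h3 h4)
  · exact pairsClose_swap₂₃ (pairsClose_swap₁₂' (pairsClose_of_bad h1 h2 h3 h4))
  · exact pairsClose_swap₂₃ (pairsClose_swap₂₃' (pairsClose_swap₁₂'
      (pairsClose_of_bad h1 h2 h3 h4)))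
  · exact pairsClose_swap₁₂ (pairsClose_swap₂₃ (pairsClose_of_bad h1 h2 h3 h4))
  · exact pairsClose_swap₁₂ (pairsClose_swap₂₃ (pairsClose_swap₁₂'
      (pairsClose_of_bad h1 h2 h3 h4)))
  · exact pairsClose_swap₁₂ (pairsClose_swap₂₃ (pairsClose_swap₂₃' (pairsClose_swap₁₂'
      (pairsClose_of_bad h1 h2 h3 h4))))

end IncenterMixer

/-- The map `{a,b,c} ↦ {σ(a,b,c), τ(a,b,c)}` built from the incenter mixer `σ` and the Nagel
co-mixer `τ` on a real normed space is a `9`-Lipschitz retraction from triples onto pairs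
whose image lies in the convex hull. -/
theorem normed_space_retraction_triples_onto_pairs
    {X : Type*} [NormedAddCommGroup X] [NormedSpace ℝ X] (a b c a' b' c' : X) :
    Metric.hausdorffDist
        ({incenterMixer a b c, nagelComixer a b c} : Set X)
        ({incenterMixer a' b' c', nagelComixer a' b' c'} : Set X) ≤
      9 * Metric.hausdorffDist ({a, b, c} : Set X) ({a', b', c'} : Set X) ∧
    ((a = b ∨ a = c ∨ b = c) →
      ({incenterMixer a b c, nagelComixer a b c} : Set X) = ({a, b, c} : Set X)) ∧
    incenterMixer a b c ∈ convexHull ℝ ({a, b, c} : Set X) ∧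
    nagelComixer a b c ∈ convexHull ℝ ({a, b, c} : Set X) := by
  refine ⟨?_, ?_, mixers_mem_convexHull a b c⟩
  · rcases pairsClose_hausdorffDist a b c a' b' c' with ⟨h1, h2⟩ | ⟨h1, h2⟩
    · exact hausdorffDist_pair_le h1 h2
    · rw [Set.pair_comm (incenterMixer a' b' c')]
      exact hausdorffDist_pair_le h1 h2
  · rintro (rfl | rfl | rfl)
    · rw [incenterMixer_left, nagelComixer_left]
      simp
    · rw [incenterMixer_swap₂₃, nagelComixer_swap₂₃, incenterMixer_left, nagelComixer_left,
        Set.pair_comm b a, Set.insert_comm]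
      simp [Set.pair_comm]
    · rw [incenterMixer_swap₁₂, incenterMixer_swap₂₃, nagelComixer_swap₁₂,
        nagelComixer_swap₂₃, incenterMixer_left, nagelComixer_left]
      simp [Set.pair_comm]
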